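/- Let Φ = (1+√5)/2. The three sets {2⌊nΦ⌋ − n : n ≥ 1}, {2⌊nΦ⌋ − n + 2 : n ≥ 1} and {4⌊nΦ⌋ + 3n + 2 : n ≥ 0} form a complementary triple: they are pairwise disjoint and their union is the set of all positive integers. In particular, for the homomorphism S of the Fibonacci language L_F with S(0) = 3 and S(1) = 1, one has S(L_F) = {2⌊nΦ⌋ − n : n ≥ 1} ∪ {2⌊nΦ⌋ − n + 2 : n ≥ 1} and ℕ \ S(L_F) = {4⌊nΦ⌋ + 3n + 2 : n ≥ 0}. -/

import Mathlib

/-- `w` is a nonempty finite factor of the infinite word `f`. -/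
def IsFactor {A : Type*} (f : ℕ → A) (w : List A) : Prop :=
  w ≠ [] ∧ ∃ i : ℕ, w = (List.range w.length).map fun j => f (i + j)

/-- The golden mean `Φ = (1+√5)/2`. -/
noncomputable def Phi : ℝ := (1 + Real.sqrt 5) / 2

/-- The Fibonacci word `c(n) = ⌊(n+2)α⌋ − ⌊(n+1)α⌋` with `α = 2 − Φ`. -/
noncomputable def fibWord (n : ℕ) : ℤ :=
  ⌊((n : ℝ) + 2) * (2 - Phi)⌋ - ⌊((n : ℝ) + 1) * (2 - Phi)⌋

/-- The infinite word `0c`: the Fibonacci word prefixed by `0`. -/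
noncomputable def fibWord0 (n : ℕ) : ℤ :=
  if n = 0 then 0 else fibWord (n - 1)

/-- The infinite word `1c`: the Fibonacci word prefixed by `1`. -/
noncomputable def fibWord1 (n : ℕ) : ℤ :=
  if n = 0 then 1 else fibWord (n - 1)

/-- The Fibonacci language: nonempty finite factors of `0c` or of `1c`. -/
def fibLang : Set (List ℤ) :=
  {w | IsFactor fibWord0 w ∨ IsFactor fibWord1 w}

/-- The homomorphism determined by `S0 = S(0)`, `S1 = S(1)`:
`S(w) = N_0(w)·S0 + N_1(w)·S1`. -/
def wordVal01 (S0 S1 : ℕ) (w : List ℤ) : ℕ :=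
  w.count 0 * S0 + w.count 1 * S1

lemma sqrt5_ne (n k : ℤ) (hn : n ≠ 0) : (n : ℝ) * Real.sqrt 5 ≠ k := by
  have h : Irrational (Real.sqrt 5) := by
    have := Nat.Prime.irrational_sqrt (p := 5) (by norm_num)
    exact_mod_cast this
  have h2 := h.intCast_mul hn
  exact h2.ne_int k

lemma sqrt5_lo : (2.2 : ℝ) < Real.sqrt 5 := by
  rw [Real.lt_sqrt (by norm_num)]; norm_num

lemma sqrt5_hi : Real.sqrt 5 < (2.3 : ℝ) := by
  rw [Real.sqrt_lt' (by norm_num)]; norm_num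

lemma sqrt5_sq : Real.sqrt 5 * Real.sqrt 5 = 5 := Real.mul_self_sqrt (by norm_num)

lemma charA (M : ℤ) : (∃ n : ℕ, 1 ≤ n ∧ M = 2 * ⌊(n : ℝ) * Phi⌋ - n) ↔
    ∃ n : ℕ, 1 ≤ n ∧ (2 : ℤ) ∣ M + n ∧ (M : ℝ) ≤ n * Real.sqrt 5 ∧ n * Real.sqrt 5 < M + 2 := by
  constructor
  · rintro ⟨n, hn, rfl⟩
    have h1 := Int.floor_le ((n : ℝ) * Phi)
    have h2 := Int.lt_floor_add_one ((n : ℝ) * Phi)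
    generalize ⌊(n : ℝ) * Phi⌋ = a at *
    unfold Phi at h1 h2
    refine ⟨n, hn, ⟨a, by ring⟩, ?_, ?_⟩ <;> push_cast <;> linarith
  · rintro ⟨n, hn, ⟨a, ha⟩, h1, h2⟩
    refine ⟨n, hn, ?_⟩
    have hM : M = 2 * a - n := by omega
    subst hM
    push_cast at h1 h2
    have : ⌊(n : ℝ) * Phi⌋ = a := by
      rw [Int.floor_eq_iff]; unfold Phi
      constructor <;> linarith
    rw [this]

lemma charB (M : ℤ) : (∃ n : ℕ, 1 ≤ n ∧ M = 2 * ⌊(n : ℝ) * Phi⌋ - n + 2) ↔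
    ∃ n : ℕ, 1 ≤ n ∧ (2 : ℤ) ∣ M + n ∧ (M : ℝ) - 2 ≤ n * Real.sqrt 5 ∧
      n * Real.sqrt 5 < M := by
  have h := charA (M - 2)
  have e1 : (∃ n : ℕ, 1 ≤ n ∧ M = 2 * ⌊(n : ℝ) * Phi⌋ - n + 2) ↔
    (∃ n : ℕ, 1 ≤ n ∧ M - 2 = 2 * ⌊(n : ℝ) * Phi⌋ - n) := by
    refine exists_congr fun n => and_congr_right fun _ => ?_
    omega
  rw [e1, h]
  refine exists_congr fun n => and_congr_right fun _ => ?_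
  push_cast
  rw [sub_add_cancel]
  refine and_congr_left fun _ => ?_
  omega

lemma charC (M : ℤ) : (∃ m : ℕ, M = 4 * ⌊(m : ℝ) * Phi⌋ + 3 * m + 2) ↔
    ∃ n : ℕ, (2 : ℤ) ∣ M + n ∧ (n : ℝ) * Real.sqrt 5 ≤ M - 2 ∧
      (M : ℝ) + 2 < (n + 2) * Real.sqrt 5 := by
  have hs := sqrt5_sq
  have hlo := sqrt5_lo
  have hhi := sqrt5_hi
  constructor
  · rintro ⟨m, rfl⟩
    have h1 := Int.floor_le ((m : ℝ) * Phi)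
    have h2 := Int.lt_floor_add_one ((m : ℝ) * Phi)
    have h0 : 0 ≤ ⌊(m : ℝ) * Phi⌋ := by
      apply Int.floor_nonneg.2; unfold Phi; positivity
    generalize ⌊(m : ℝ) * Phi⌋ = a at *
    lift a to ℕ using h0
    unfold Phi at h1 h2
    refine ⟨2 * a + m, ⟨3 * a + 2 * m + 1, by push_cast; ring⟩, ?_, ?_⟩
    · push_cast
      push_cast at h1
      nlinarith [mul_nonneg (sub_nonneg.2 h1) (sub_nonneg.2 (le_of_lt hlo) |>.trans (by linarith : Real.sqrt 5 - 2.2 ≤ Real.sqrt 5 - 2))]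
    · push_cast
      push_cast at h2
      nlinarith [mul_pos (sub_pos.2 h2) (by linarith : 0 < Real.sqrt 5 - 2)]
  · rintro ⟨n, ⟨c, hc⟩, h1, h2⟩
    have hm : 0 ≤ M - 2 - 2 * n := by
      have : (0 : ℝ) ≤ ((M - 2 - 2 * n : ℤ) : ℝ) := by
        push_cast
        nlinarith [(Nat.cast_nonneg n : (0 : ℝ) ≤ n)]
      exact_mod_cast this
    obtain ⟨m, hm⟩ := Int.eq_ofNat_of_zero_le hm
    refine ⟨m, ?_⟩
    have hM : M = m + 2 + 2 * n := by omega
    obtain ⟨b, hb⟩ : ∃ b : ℤ, (n : ℤ) = 2 * b + m := ⟨2 * n + 1 - c + 0, by omega⟩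
    have hnr : (n : ℝ) = 2 * b + m := by exact_mod_cast hb
    have hMr : (M : ℝ) = m + 2 + 2 * n := by exact_mod_cast hM
    have : ⌊(m : ℝ) * Phi⌋ = b := by
      rw [Int.floor_eq_iff]; unfold Phi
      rw [hMr, hnr] at h1 h2
      have hp : 0 < Real.sqrt 5 + 2 := by linarith
      constructor
      · nlinarith [mul_nonneg (sub_nonneg.2 h1) hp.le]
      · nlinarith [mul_pos (sub_pos.2 h2) hp]
    rw [this]; omega

lemma disj_aux (M : ℤ) (n n' : ℕ) (hd : (2 : ℤ) ∣ M + n) (hd' : (2 : ℤ) ∣ M + n')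
    (h1 : (M : ℝ) - 2 ≤ n * Real.sqrt 5) (h2 : n' * Real.sqrt 5 < M + 2) : n' ≤ n := by
  by_contra hlt
  have h : n + 2 ≤ n' := by omega
  have h' : (n : ℝ) + 2 ≤ n' := by exact_mod_cast h
  nlinarith [sqrt5_lo]

lemma disj_C (M : ℤ) (n n' : ℕ) (hn : 1 ≤ n) (hd : (2 : ℤ) ∣ M + n) (hd' : (2 : ℤ) ∣ M + n')
    (h1 : (M : ℝ) - 2 ≤ n * Real.sqrt 5) (h2 : n * Real.sqrt 5 < M + 2)
    (h3 : (n' : ℝ) * Real.sqrt 5 ≤ M - 2) (h4 : (M : ℝ) + 2 < (n' + 2) * Real.sqrt 5) : False := by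
  have hlo := sqrt5_lo
  have hle : n' ≤ n := disj_aux M n n' hd hd' h1 (by linarith)
  have hlt : n < n' + 2 := by
    by_contra h
    have h' : (n' : ℝ) + 2 ≤ n := by exact_mod_cast not_lt.1 h
    nlinarith
  have he : n' = n := by omega
  subst he
  apply sqrt5_ne n' (M - 2) (by omega)
  push_cast; linarith

lemma cover (M : ℤ) (hM : 0 < M) :
    (∃ n : ℕ, 1 ≤ n ∧ (2 : ℤ) ∣ M + n ∧ (M : ℝ) - 2 ≤ n * Real.sqrt 5 ∧
      n * Real.sqrt 5 < M + 2) ∨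
    (∃ n : ℕ, (2 : ℤ) ∣ M + n ∧ (n : ℝ) * Real.sqrt 5 ≤ M - 2 ∧
      (M : ℝ) + 2 < (n + 2) * Real.sqrt 5) := by
  classical
  have hlo := sqrt5_lo
  have hhi := sqrt5_hi
  have hex : ∃ n : ℕ, (2 : ℤ) ∣ M + n ∧ (M : ℝ) + 2 < (n + 2) * Real.sqrt 5 := by
    refine ⟨M.toNat, by omega, ?_⟩
    have : ((M.toNat : ℤ) : ℝ) = M := by rw [Int.toNat_of_nonneg hM.le]
    have h2 : (M.toNat : ℝ) = M := by exact_mod_cast this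
    have hM' : (0 : ℝ) < M := by exact_mod_cast hM
    rw [h2]; nlinarith
  obtain ⟨hd, h1⟩ := Nat.find_spec hex
  have hmin := fun k (hk : k < Nat.find hex) => Nat.find_min hex hk
  generalize Nat.find hex = n at *
  have hM' : (1 : ℝ) ≤ M := by exact_mod_cast hM
  have hup : (n : ℝ) * Real.sqrt 5 < M + 2 := by
    rcases Nat.lt_or_ge n 2 with h | h
    · interval_cases n
      · simp; linarith
      · simp; linarith
    · obtain ⟨k, rfl⟩ := Nat.exists_eq_add_of_le' h
      have := hmin k (by omega)
      push_cast at this hd ⊢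
      have h3 : ¬ ((M : ℝ) + 2 < (k + 2) * Real.sqrt 5) := fun h => this ⟨by omega, h⟩
      refine lt_of_le_of_ne (not_lt.1 h3) fun he => ?_
      apply sqrt5_ne (k + 2) (M + 2) (by omega)
      push_cast; exact he
  by_cases h : (n : ℝ) * Real.sqrt 5 ≤ M - 2
  · exact Or.inr ⟨n, hd, h, h1⟩
  · left
    refine ⟨n, ?_, hd, (not_le.1 h).le, hup⟩
    by_contra h0
    have : n = 0 := by omega
    subst this
    apply h
    have : (2 : ℝ) ≤ M := by
      have : (2 : ℤ) ≤ M := by omega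
      exact_mod_cast this
    simp; linarith

/-- Common form of `0c` and `1c`. -/
noncomputable def Hsum (e : ℤ) (n : ℕ) : ℤ := ⌊(n : ℝ) * (2 - Phi)⌋ - if n = 0 then e else 0

lemma alpha_floor_zero : ⌊(2 - Phi)⌋ = 0 := by
  have hlo := sqrt5_lo
  have hhi := sqrt5_hi
  rw [Int.floor_eq_iff]; unfold Phi; constructor <;> push_cast <;> linarith

lemma fibWord_succ (n : ℕ) (e : ℤ) : fibWord n = Hsum e (n + 1 + 1) - Hsum e (n + 1) := by
  unfold fibWord Hsum
  simp
  ring_nf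

lemma fibWord0_eq (n : ℕ) : fibWord0 n = Hsum 0 (n + 1) - Hsum 0 n := by
  cases n with
  | zero => simp [fibWord0, Hsum, alpha_floor_zero]
  | succ n => simp only [fibWord0, Nat.succ_ne_zero, if_false, Nat.add_sub_cancel]; exact fibWord_succ n 0

lemma fibWord1_eq (n : ℕ) : fibWord1 n = Hsum 1 (n + 1) - Hsum 1 n := by
  cases n with
  | zero => simp [fibWord1, Hsum, alpha_floor_zero]
  | succ n => simp only [fibWord1, Nat.succ_ne_zero, if_false, Nat.add_sub_cancel]; exact fibWord_succ n 1

lemma floor_add_cases (x y : ℝ) : ⌊x + y⌋ - ⌊x⌋ = ⌊y⌋ ∨ ⌊x + y⌋ - ⌊x⌋ = ⌊y⌋ + 1 := by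
  have h1 := Int.le_floor_add x y
  have h2 := Int.le_floor_add_floor x y
  omega

lemma fibWord_01 (n : ℕ) : fibWord n = 0 ∨ fibWord n = 1 := by
  unfold fibWord
  have := floor_add_cases (((n : ℝ) + 1) * (2 - Phi)) (2 - Phi)
  rw [alpha_floor_zero] at this
  have e : ((n : ℝ) + 2) * (2 - Phi) = ((n : ℝ) + 1) * (2 - Phi) + (2 - Phi) := by ring
  rw [e]; simpa using this

lemma fibWord0_01 (n : ℕ) : fibWord0 n = 0 ∨ fibWord0 n = 1 := by
  unfold fibWord0; split_ifs
  · simp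
  · exact fibWord_01 _

lemma fibWord1_01 (n : ℕ) : fibWord1 n = 0 ∨ fibWord1 n = 1 := by
  unfold fibWord1; split_ifs
  · simp
  · exact fibWord_01 _

lemma wordVal_eq (w : List ℤ) (h : ∀ x ∈ w, x = 0 ∨ x = 1) :
    (wordVal01 3 1 w : ℤ) = 3 * w.length - 2 * w.sum := by
  induction w with
  | nil => simp [wordVal01]
  | cons a t ih =>
    have ih := ih fun x hx => h x (List.mem_cons_of_mem _ hx)
    unfold wordVal01 at *
    rcases h a List.mem_cons_self with rfl | rfl
    · simp at *; linarith
    · simp at *; linarith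

lemma sum_eq (f : ℕ → ℤ) (H : ℕ → ℤ) (hf : ∀ n, f n = H (n + 1) - H n) (i k : ℕ) :
    ((List.range k).map fun j => f (i + j)).sum = H (i + k) - H i := by
  induction k with
  | zero => simp
  | succ k ih =>
    rw [List.range_succ, List.map_append, List.sum_append, ih]
    simp [hf]
    ring_nf

lemma val_range (f : ℕ → ℤ) (H : ℕ → ℤ) (hf : ∀ n, f n = H (n + 1) - H n)
    (h01 : ∀ n, f n = 0 ∨ f n = 1) (i k : ℕ) :
    (wordVal01 3 1 ((List.range k).map fun j => f (i + j)) : ℤ) =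
      3 * k - 2 * (H (i + k) - H i) := by
  rw [wordVal_eq, sum_eq f H hf]
  · simp
  · intro x hx
    obtain ⟨j, -, rfl⟩ := List.mem_map.1 hx
    exact h01 _

lemma alpha_floor (k : ℕ) (hk : 1 ≤ k) :
    ⌊(k : ℝ) * (2 - Phi)⌋ = 2 * k - 1 - ⌊(k : ℝ) * Phi⌋ := by
  have h1 := Int.floor_le ((k : ℝ) * Phi)
  have h2 := Int.lt_floor_add_one ((k : ℝ) * Phi)
  generalize ⌊(k : ℝ) * Phi⌋ = a at *
  have hne : (a : ℝ) ≠ k * Phi := by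
    intro h
    apply sqrt5_ne k (2 * a - k) (by omega)
    push_cast; rw [h]; unfold Phi; ring
  have h1 := lt_of_le_of_ne h1 hne
  rw [Int.floor_eq_iff]; push_cast
  constructor <;> linarith

lemma H_cases (e : ℤ) (he : e = 0 ∨ e = 1) (i k : ℕ) (hk : 1 ≤ k) :
    Hsum e (i + k) - Hsum e i = ⌊(k : ℝ) * (2 - Phi)⌋ ∨
    Hsum e (i + k) - Hsum e i = ⌊(k : ℝ) * (2 - Phi)⌋ + 1 := by
  unfold Hsum
  rw [if_neg (by omega : ¬ (i + k = 0))]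
  by_cases hi : i = 0
  · subst hi; simp; omega
  · rw [if_neg hi]
    have := floor_add_cases (i * (2 - Phi)) (k * (2 - Phi))
    rw [← add_mul] at this
    push_cast; simpa using this

lemma H_zero (e : ℤ) (k : ℕ) (hk : 1 ≤ k) :
    Hsum e (0 + k) - Hsum e 0 = ⌊(k : ℝ) * (2 - Phi)⌋ + e := by
  unfold Hsum
  rw [if_neg (by omega : ¬ (0 + k = 0))]
  simp

lemma lang_eq : {m : ℕ | ∃ w ∈ fibLang, wordVal01 3 1 w = m} =
      {m : ℕ | ∃ n : ℕ, 1 ≤ n ∧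
        ((m : ℤ) = 2 * ⌊(n : ℝ) * Phi⌋ - n ∨ (m : ℤ) = 2 * ⌊(n : ℝ) * Phi⌋ - n + 2)} := by
  ext m
  simp only [Set.mem_ofPred_eq]
  constructor
  · rintro ⟨w, hw, rfl⟩
    rcases hw with ⟨hne, i, hw⟩ | ⟨hne, i, hw⟩
    all_goals
      have hk : 1 ≤ w.length := List.length_pos_iff.2 hne
      refine ⟨w.length, hk, ?_⟩
      generalize w.length = k at *
      subst hw
    · rw [val_range _ _ fibWord0_eq fibWord0_01]
      have := H_cases 0 (by simp) i k hk
      rw [alpha_floor k hk] at this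
      omega
    · rw [val_range _ _ fibWord1_eq fibWord1_01]
      have := H_cases 1 (by simp) i k hk
      rw [alpha_floor k hk] at this
      omega
  · rintro ⟨k, hk, h | h⟩
    · refine ⟨(List.range k).map fun j => fibWord1 (0 + j), Or.inr ⟨?_, 0, by simp⟩, ?_⟩
      · simp; omega
      · have e := val_range _ _ fibWord1_eq fibWord1_01 0 k
        rw [H_zero 1 k hk, alpha_floor k hk] at e
        omega
    · refine ⟨(List.range k).map fun j => fibWord0 (0 + j), Or.inl ⟨?_, 0, by simp⟩, ?_⟩
      · simp; omega
      · have e := val_range _ _ fibWord0_eq fibWord0_01 0 k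
        rw [H_zero 0 k hk, alpha_floor k hk] at e
        omega

lemma dAB (M : ℤ) (hA : ∃ n : ℕ, 1 ≤ n ∧ M = 2 * ⌊(n : ℝ) * Phi⌋ - n)
    (hB : ∃ n : ℕ, 1 ≤ n ∧ M = 2 * ⌊(n : ℝ) * Phi⌋ - n + 2) : False := by
  obtain ⟨n, hn, hd, h1, h2⟩ := (charA M).1 hA
  obtain ⟨n', hn', hd', h1', h2'⟩ := (charB M).1 hB
  have a := disj_aux M n n' hd hd' (by linarith) (by linarith)
  have b := disj_aux M n' n hd' hd (by linarith) (by linarith)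
  have : n = n' := by omega
  subst this; linarith

lemma dAC (M : ℤ) (hA : ∃ n : ℕ, 1 ≤ n ∧ M = 2 * ⌊(n : ℝ) * Phi⌋ - n)
    (hC : ∃ n : ℕ, M = 4 * ⌊(n : ℝ) * Phi⌋ + 3 * n + 2) : False := by
  obtain ⟨n, hn, hd, h1, h2⟩ := (charA M).1 hA
  obtain ⟨n', hd', h1', h2'⟩ := (charC M).1 hC
  exact disj_C M n n' hn hd hd' (by linarith) (by linarith) h1' h2'

lemma dBC (M : ℤ) (hB : ∃ n : ℕ, 1 ≤ n ∧ M = 2 * ⌊(n : ℝ) * Phi⌋ - n + 2)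
    (hC : ∃ n : ℕ, M = 4 * ⌊(n : ℝ) * Phi⌋ + 3 * n + 2) : False := by
  obtain ⟨n, hn, hd, h1, h2⟩ := (charB M).1 hB
  obtain ⟨n', hd', h1', h2'⟩ := (charC M).1 hC
  exact disj_C M n n' hn hd hd' (by linarith) (by linarith) h1' h2'

lemma coverABC (M : ℤ) (hM : 0 < M) : ((∃ n : ℕ, 1 ≤ n ∧ M = 2 * ⌊(n : ℝ) * Phi⌋ - n) ∨
    (∃ n : ℕ, 1 ≤ n ∧ M = 2 * ⌊(n : ℝ) * Phi⌋ - n + 2)) ∨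
    (∃ n : ℕ, M = 4 * ⌊(n : ℝ) * Phi⌋ + 3 * n + 2) := by
  rw [charA, charB, charC]
  rcases cover M hM with ⟨n, hn, hd, h1, h2⟩ | h
  · left
    rcases le_or_gt (M : ℝ) (n * Real.sqrt 5) with h | h
    · exact Or.inl ⟨n, hn, hd, h, h2⟩
    · exact Or.inr ⟨n, hn, hd, h1, h⟩
  · exact Or.inr h

lemma floor_ge (n : ℕ) : (n : ℤ) ≤ ⌊(n : ℝ) * Phi⌋ := by
  rw [Int.le_floor]
  have hlo := sqrt5_lo
  have : (1 : ℝ) ≤ Phi := by unfold Phi; linarith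
  push_cast
  nlinarith [(Nat.cast_nonneg n : (0 : ℝ) ≤ n)]

theorem complementary_triple_two :
    ((Disjoint {m : ℤ | ∃ n : ℕ, 1 ≤ n ∧ m = 2 * ⌊(n : ℝ) * Phi⌋ - n}
               {m : ℤ | ∃ n : ℕ, 1 ≤ n ∧ m = 2 * ⌊(n : ℝ) * Phi⌋ - n + 2} ∧
      Disjoint {m : ℤ | ∃ n : ℕ, 1 ≤ n ∧ m = 2 * ⌊(n : ℝ) * Phi⌋ - n}
               {m : ℤ | ∃ n : ℕ, m = 4 * ⌊(n : ℝ) * Phi⌋ + 3 * n + 2} ∧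
      Disjoint {m : ℤ | ∃ n : ℕ, 1 ≤ n ∧ m = 2 * ⌊(n : ℝ) * Phi⌋ - n + 2}
               {m : ℤ | ∃ n : ℕ, m = 4 * ⌊(n : ℝ) * Phi⌋ + 3 * n + 2}) ∧
     {m : ℤ | ∃ n : ℕ, 1 ≤ n ∧ m = 2 * ⌊(n : ℝ) * Phi⌋ - n} ∪
       {m : ℤ | ∃ n : ℕ, 1 ≤ n ∧ m = 2 * ⌊(n : ℝ) * Phi⌋ - n + 2} ∪
       {m : ℤ | ∃ n : ℕ, m = 4 * ⌊(n : ℝ) * Phi⌋ + 3 * n + 2} =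
       {m : ℤ | 0 < m}) ∧
    {m : ℕ | ∃ w ∈ fibLang, wordVal01 3 1 w = m} =
      {m : ℕ | ∃ n : ℕ, 1 ≤ n ∧
        ((m : ℤ) = 2 * ⌊(n : ℝ) * Phi⌋ - n ∨ (m : ℤ) = 2 * ⌊(n : ℝ) * Phi⌋ - n + 2)} ∧
    {n : ℕ | 0 < n ∧ n ∉ {m : ℕ | ∃ w ∈ fibLang, wordVal01 3 1 w = m}} =
      {m : ℕ | ∃ n : ℕ, (m : ℤ) = 4 * ⌊(n : ℝ) * Phi⌋ + 3 * n + 2} := by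
  refine ⟨⟨⟨?_, ?_, ?_⟩, ?_⟩, lang_eq, ?_⟩
  · exact Set.disjoint_left.2 fun M hA hB => dAB M hA hB
  · exact Set.disjoint_left.2 fun M hA hB => dAC M hA hB
  · exact Set.disjoint_left.2 fun M hA hB => dBC M hA hB
  · ext M
    constructor
    · rintro ((⟨n, hn, rfl⟩ | ⟨n, hn, rfl⟩) | ⟨n, rfl⟩) <;>
      · have := floor_ge n
        simp only [Set.mem_ofPred_eq]
        omega
    · exact fun h => coverABC M h
  · rw [lang_eq]
    ext m
    simp only [Set.mem_ofPred_eq]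
    constructor
    · rintro ⟨hm, hnot⟩
      rcases coverABC m (by omega) with (⟨n, hn, h⟩ | ⟨n, hn, h⟩) | h
      · exact absurd ⟨n, hn, Or.inl h⟩ hnot
      · exact absurd ⟨n, hn, Or.inr h⟩ hnot
      · exact h
    · intro hC
      refine ⟨?_, ?_⟩
      · obtain ⟨n, hn⟩ := hC
        have := floor_ge n
        omega
      · rintro ⟨n, hn, h | h⟩
        · exact dAC m ⟨n, hn, h⟩ hC
        · exact dBC m ⟨n, hn, h⟩ hC
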